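/- arXiv:2308.00577 — 8 statements merged into one kernel-verified Lean document; each statement's English description precedes it below -/
import Mathlib

section
/- Let B be a group, η : B → ℤ a surjective homomorphism with kernel L, m ≥ 1, and g ∈ B such that: (a) η(g) = 1 and gᵐ commutes with every element of L; (b) there is a subgroup G ≤ L such that L is the internal direct product of the subgroups Gᵢ := gⁱ G g⁻ⁱ, i = 0, …, m−1. Then the map θ : G ≀ₘ ℤ → B defined by θ(a; k) = (∏_{i=0}^{m−1} gⁱ a(i) g⁻ⁱ) · gᵏ is a group isomorphism; moreover η(θ(a;k)) = k, so θ maps (Fin m → G) × {0} onto L. -/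
/-- The automorphism of `Fin m → G` cyclically shifting coordinates: `(σ f)(i) = f (i - 1)`. -/
def cycShift (G : Type*) [Group G] (m : ℕ) [NeZero m] : MulAut (Fin m → G) where
  toFun f i := f (i - 1)
  invFun f i := f (i + 1)
  left_inv f := by funext i; simp
  right_inv f := by funext i; simp
  map_mul' f g := rfl

/-- The wreath product `G ≀ₘ ℤ = (Fin m → G) ⋊_σ ℤ`. -/
abbrev WrZ (G : Type*) [Group G] (m : ℕ) [NeZero m] :=
  (Fin m → G) ⋊[zpowersHom (MulAut (Fin m → G)) (cycShift G m)] Multiplicative ℤ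

/-- The conjugate `g S g⁻¹` of a subgroup `S` by an element `g`. -/
def conjSub {B : Type*} [Group B] (g : B) (S : Subgroup B) : Subgroup B :=
  Subgroup.map (MulAut.conj g).toMonoidHom S

/-- The map `(Π i, gⁱ G g⁻ⁱ) → B` given by the ordered product `x₀ x₁ ⋯ x_{m−1}`. -/
def dmap {B : Type*} [Group B] (m : ℕ) (g : B) (G : Subgroup B) :
    (∀ i : Fin m, ↥(conjSub (g ^ (i : ℕ)) G)) → B :=
  fun u => (List.ofFn fun i => (u i : B)).prod

/-- The map `θ : G ≀ₘ ℤ → B`, `θ(a; k) = (∏_{i=0}^{m−1} gⁱ a(i) g⁻ⁱ) · gᵏ`. -/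
def thetaW {B : Type*} [Group B] (m : ℕ) [NeZero m] (g : B) (G : Subgroup B) :
    WrZ ↥G m → B :=
  fun p => (List.ofFn fun i : Fin m =>
      g ^ (i : ℕ) * ((p.left i : B)) * (g ^ (i : ℕ))⁻¹).prod *
    g ^ (Multiplicative.toAdd p.right)

/-!
`θ` is the homomorphism out of a semidirect product induced by `Φ : a ↦ ∏ᵢ gⁱ a(i) g⁻ⁱ` and
`k ↦ gᵏ`. The one thing to check for this is that `Φ` turns the cyclic shift into conjugation by
`g`. As `Φ` is a homomorphism, it is enough to do so on functions with a single nontrivial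
coordinate; there, moving from position `i` to `i + 1` conjugates the value once more by `g`, and
the wrap-around from `m - 1` to `0` is harmless because `gᵐ` commutes with `G`. Bijectivity is then
the general fact that `1 → L → B → ℤ → 1`, split by `k ↦ gᵏ`, exhibits `B` as a semidirect product.
-/

section SplitExtension

variable {N Q B : Type*} [Group N] [Group Q] [Group B] {α : Q →* MulAut N} {f : N →* B}
  {s : Q →* B} {η : B →* Q}
  (h : ∀ q, f.comp (α q).toMonoidHom = (MulAut.conj (s q)).toMonoidHom.comp f)

theorem semidirectLift_apply (p : N ⋊[α] Q) :
    SemidirectProduct.lift f s h p = f p.left * s p.right :=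
  rfl

theorem image_semidirectLift_right_eq_one :
    SemidirectProduct.lift f s h '' {p | p.right = 1} = (f.range : Set B) := by
  ext b
  constructor
  · rintro ⟨p, hp : p.right = 1, rfl⟩
    exact ⟨p.left, by rw [semidirectLift_apply, hp, map_one, mul_one]⟩
  · rintro ⟨n, rfl⟩
    exact ⟨SemidirectProduct.inl n, rfl, SemidirectProduct.lift_inl f s h n⟩

theorem map_semidirectLift_eq_right (hf : f.range ≤ η.ker) (hs : Function.LeftInverse η s)
    (p : N ⋊[α] Q) : η (SemidirectProduct.lift f s h p) = p.right := by
  have hker : η (f p.left) = 1 := hf ⟨p.left, rfl⟩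
  rw [semidirectLift_apply, map_mul, hker, one_mul, hs]

theorem semidirectLift_bijective_of_range_eq_ker (hf : Function.Injective f)
    (hrange : f.range = η.ker) (hs : Function.LeftInverse η s) :
    Function.Bijective (SemidirectProduct.lift f s h) := by
  refine ⟨(injective_iff_map_eq_one _).mpr fun p hp => ?_, fun b => ?_⟩
  · have hright : p.right = 1 := by
      rw [← map_semidirectLift_eq_right h hrange.le hs, hp, map_one]
    have hleft : f p.left = 1 := by
      rwa [semidirectLift_apply, hright, map_one, mul_one] at hp
    exact SemidirectProduct.ext ((map_eq_one_iff f hf).mp hleft) hright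
  · have hb : b * (s (η b))⁻¹ ∈ f.range := by
      rw [hrange, MonoidHom.mem_ker, map_mul, map_inv, hs, mul_inv_cancel]
    obtain ⟨n, hn⟩ := hb
    exact ⟨⟨n, η b⟩, by rw [semidirectLift_apply, hn, inv_mul_cancel_right]⟩

end SplitExtension

section CyclicShift

theorem mulAut_zpow_semiconj {M N : Type*} [Mul M] [Mul N] {f : M → N} {σ : MulAut M}
    {τ : MulAut N} (h : Function.Semiconj f σ τ) (k : ℤ) :
    Function.Semiconj f ⇑(σ ^ k) ⇑(τ ^ k) := by
  have hinv : Function.Semiconj f ⇑σ⁻¹ ⇑τ⁻¹ :=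
    h.inverses_right σ.apply_symm_apply τ.symm_apply_apply
  induction k with
  | zero => exact Function.Semiconj.id_right
  | succ k ih =>
    rw [zpow_add_one, zpow_add_one]
    exact ih.comp_right h
  | pred k ih =>
    rw [zpow_sub_one, zpow_sub_one]
    exact ih.comp_right hinv

theorem cycShift_mulSingle {H : Type*} [Group H] {m : ℕ} [NeZero m] (i : Fin m) (x : H) :
    cycShift H m (Pi.mulSingle i x) = Pi.mulSingle (i + 1) x := by
  funext j
  change (Pi.mulSingle i x : Fin m → H) (j - 1) = _
  simp only [Pi.mulSingle_apply, sub_eq_iff_eq_add]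

theorem prod_ofFn_mulSingle {M : Type*} [Monoid M] {m : ℕ} (i : Fin m) (x : M) :
    (List.ofFn (Pi.mulSingle i x : Fin m → M)).prod = x := by
  rw [List.ofFn_eq_map,
    List.prod_map_eq_pow_single i (Pi.mulSingle i x) fun j hj _ =>
      Pi.mulSingle_eq_of_ne (M := fun _ => M) hj x,
    List.count_finRange, pow_one, Pi.mulSingle_eq_same]

variable {B : Type*} [Group B] {m : ℕ} {g : B}

theorem conj_pow_mod {x : B} (h : Commute (g ^ m) x) (n : ℕ) :
    MulAut.conj (g ^ (n % m)) x = MulAut.conj (g ^ n) x := by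
  have hfix : MulAut.conj ((g ^ m) ^ (n / m)) x = x := (h.pow_left _).mul_inv_cancel
  rw [← hfix, ← MulAut.mul_apply, ← map_mul, hfix, ← pow_mul, ← pow_add, Nat.mod_add_div]

theorem semiconj_cycShift_conj [NeZero m] {H : Type*} [Group H] {Φ : (Fin m → H) →* B}
    {ι : H → B} (hΦ : ∀ i x, Φ (Pi.mulSingle i x) = MulAut.conj (g ^ (i : ℕ)) (ι x))
    (hcomm : ∀ x, Commute (g ^ m) (ι x)) :
    Function.Semiconj Φ (cycShift H m) (MulAut.conj g) := by
  suffices Φ.comp (cycShift H m).toMonoidHom = (MulAut.conj g).toMonoidHom.comp Φ from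
    DFunLike.congr_fun this
  refine MonoidHom.pi_ext fun i x => ?_
  have hval : ((i + 1 : Fin m) : ℕ) = (i + 1) % m := by
    rw [Fin.val_add, Fin.val_one', Nat.add_mod_mod]
  calc Φ (cycShift H m (Pi.mulSingle i x))
      = MulAut.conj (g ^ ((i + 1) % m : ℕ)) (ι x) := by rw [cycShift_mulSingle, hΦ, hval]
    _ = MulAut.conj (g ^ (i + 1 : ℕ)) (ι x) := conj_pow_mod (hcomm x) _
    _ = MulAut.conj g (Φ (Pi.mulSingle i x)) := by
      rw [hΦ, pow_succ', map_mul, MulAut.mul_apply]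

end CyclicShift

section ConjProd

variable {B : Type*} [Group B] {m : ℕ} {g : B} {G : Subgroup B}

/-- The coordinatewise isomorphism `a ↦ (gⁱ a(i) g⁻ⁱ)ᵢ` from `Gᵐ` onto the product of the
conjugates `gⁱ G g⁻ⁱ`. -/
noncomputable def conjPiEquiv (m : ℕ) (g : B) (G : Subgroup B) :
    (Fin m → G) ≃* (∀ i : Fin m, ↥(conjSub (g ^ (i : ℕ)) G)) :=
  MulEquiv.piCongrRight fun i =>
    G.equivMapOfInjective (MulAut.conj (g ^ (i : ℕ))).toMonoidHom (MulAut.conj _).injective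

variable (hhom : ∀ u v : ∀ i : Fin m, ↥(conjSub (g ^ (i : ℕ)) G),
  dmap m g G (u * v) = dmap m g G u * dmap m g G v)

/-- The homomorphism `a ↦ ∏ᵢ gⁱ a(i) g⁻ⁱ` on `Gᵐ`, defined when the ordered product `dmap` of the
conjugates `gⁱ G g⁻ⁱ` is multiplicative. -/
noncomputable def conjProdHom : (Fin m → G) →* B :=
  (MonoidHom.mk' (dmap m g G) hhom).comp (conjPiEquiv m g G).toMonoidHom

theorem conjProdHom_mulSingle (i : Fin m) (x : G) :
    conjProdHom hhom (Pi.mulSingle i x) = MulAut.conj (g ^ (i : ℕ)) x := by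
  have hfactors : (fun j : Fin m =>
      MulAut.conj (g ^ (j : ℕ)) ((Pi.mulSingle i x : Fin m → G) j : B)) =
        Pi.mulSingle i (MulAut.conj (g ^ (i : ℕ)) (x : B)) :=
    funext <| Pi.apply_mulSingle (fun (j : Fin m) (y : G) => MulAut.conj (g ^ (j : ℕ)) (y : B))
      (fun _ => map_one _) i x
  exact (congrArg (fun c => (List.ofFn c).prod) hfactors).trans (prod_ofFn_mulSingle i _)

theorem conjProdHom_injective (hinj : Function.Injective (dmap m g G)) :
    Function.Injective (conjProdHom hhom) :=
  hinj.comp (conjPiEquiv m g G).injective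

theorem coe_range_conjProdHom :
    ((conjProdHom hhom).range : Set B) = Set.range (dmap m g G) :=
  (conjPiEquiv m g G).surjective.range_comp (dmap m g G)

theorem conjProdHom_comp_zpowersHom_cycShift [NeZero m] (hcomm : ∀ x ∈ G, Commute (g ^ m) x)
    (k : Multiplicative ℤ) :
    (conjProdHom hhom).comp (zpowersHom _ (cycShift G m) k).toMonoidHom =
      (MulAut.conj (zpowersHom B g k)).toMonoidHom.comp (conjProdHom hhom) := by
  ext a
  have hshift := semiconj_cycShift_conj (conjProdHom_mulSingle hhom) fun x => hcomm x x.2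
  have hzpow := mulAut_zpow_semiconj hshift k.toAdd a
  rwa [← map_zpow] at hzpow

theorem thetaW_eq_semidirectLift [NeZero m] (hcomm : ∀ x ∈ G, Commute (g ^ m) x) :
    thetaW m g G = SemidirectProduct.lift (conjProdHom hhom) (zpowersHom B g)
      (conjProdHom_comp_zpowersHom_cycShift hhom hcomm) :=
  rfl

end ConjProd

theorem leftInverse_zpowersHom {B : Type*} [Group B] {η : B →* Multiplicative ℤ} {g : B}
    (hg : η g = Multiplicative.ofAdd 1) : Function.LeftInverse η (zpowersHom B g) := fun k => by
  rw [zpowersHom_apply, map_zpow, hg, ← ofAdd_zsmul, smul_eq_mul, mul_one, ofAdd_toAdd]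

/-- Let `η : B → ℤ` be surjective with kernel `L`, `m ≥ 1`, `g ∈ B` with
`η g = 1` and `gᵐ` commuting with `L`, and `G ≤ L` a subgroup such that `L` is the internal
direct product of the conjugates `Gᵢ = gⁱ G g⁻ⁱ`, `i = 0, …, m−1` (the ordered-product map
`(Π i, Gᵢ) → B` is an injective homomorphism with range `L`). Then
`θ : G ≀ₘ ℤ → B`, `θ(a;k) = (∏ᵢ gⁱ a(i) g⁻ⁱ)·gᵏ`, is a group isomorphism, and
`η (θ (a;k)) = k` (so `θ` maps `(Fin m → G) × {0}` onto `L`). -/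
theorem stmt_4 {B : Type*} [Group B] (η : B →* Multiplicative ℤ)
    (hsurj : Function.Surjective η) (m : ℕ) (hm : 1 ≤ m) [NeZero m] (g : B)
    (hg : η g = Multiplicative.ofAdd 1)
    (hcomm : ∀ v ∈ η.ker, Commute (g ^ m) v)
    (G : Subgroup B) (hGL : G ≤ η.ker)
    (hhom : ∀ u v : ∀ i : Fin m, ↥(conjSub (g ^ (i : ℕ)) G),
      dmap m g G (u * v) = dmap m g G u * dmap m g G v)
    (hinj : Function.Injective (dmap m g G))
    (hrange : Set.range (dmap m g G) = (η.ker : Set B)) :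
    (∀ x y : WrZ ↥G m, thetaW m g G (x * y) = thetaW m g G x * thetaW m g G y) ∧
    Function.Bijective (thetaW m g G) ∧
    (∀ p : WrZ ↥G m, η (thetaW m g G p) = p.right) ∧
    thetaW m g G '' {p : WrZ ↥G m | p.right = 1} = (η.ker : Set B) := by
  have hcommG : ∀ x ∈ G, Commute (g ^ m) x := fun x hx => hcomm x (hGL hx)
  have hker : (conjProdHom hhom).range = η.ker :=
    SetLike.coe_injective ((coe_range_conjProdHom hhom).trans hrange)
  have hsec : Function.LeftInverse η (zpowersHom B g) := leftInverse_zpowersHom hg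
  rw [thetaW_eq_semidirectLift hhom hcommG]
  refine ⟨map_mul _, ?bijective, map_semidirectLift_eq_right _ hker.le hsec, ?image⟩
  case bijective =>
    exact semidirectLift_bijective_of_range_eq_ker _ (conjProdHom_injective hhom hinj) hker hsec
  case image => rw [image_semidirectLift_right_eq_one, hker]
end

section
/- Let B be a group, η : B → ℤ a surjective homomorphism with kernel L, m ≥ 1, g ∈ B and G ≤ L satisfying: (a) η(g) = 1 and gᵐ commutes with every element of L; (b) L is the internal direct product of the subgroups Gᵢ := gⁱ G g⁻ⁱ, i = 0, …, m−1, so that θ : G ≀ₘ ℤ → B, θ(a; k) = (∏_{i=0}^{m−1} gⁱ a(i) g⁻ⁱ) · gᵏ, is a group isomorphism. Suppose in addition A is a normal subgroup of B such that: (c) η(A) = mℤ and gᵐ ∈ A; (d) the intersection K := A ∩ L is generated by the subgroups Pᵢ := gⁱ P g⁻ⁱ, i = 0, …, m−1, where P := A ∩ G. Then θ maps the subgroup (Fin m → P) × mℤ of G ≀ₘ ℤ onto A. -/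
/-!
Since `A` contains `gᵐ` and `η(A)` is generated by `η(gᵐ)`, the modular law splits `A` as
`(A ∩ ker η) · ⟨gᵐ⟩`. Multiplicativity of the ordered product on `∏ Gᵢ` forces distinct `Gᵢ` to
commute elementwise, so the subgroup `A ∩ ker η` generated by the `Pᵢ ≤ Gᵢ` consists of the ordered
products `x₀ ⋯ x_{m−1}` with `xᵢ ∈ Pᵢ`. Hence `A` is the set of all `x₀ ⋯ x_{m−1} · gᵐᵏ`, which is
the image under `θ`.
-/

theorem prod_ofFn_eq_single {M : Type*} [Monoid M] {n : ℕ} {f : Fin n → M} (i : Fin n)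
    (hf : ∀ j ≠ i, f j = 1) : (List.ofFn f).prod = f i := by
  rw [List.ofFn_eq_map, List.prod_map_eq_pow_single i f fun j hj _ => hf j hj,
    List.count_finRange, pow_one]

theorem noncommProd_univ_eq_prod_ofFn {M : Type*} [Monoid M] {n : ℕ} (f : Fin n → M)
    (hcomm : ((Finset.univ : Finset (Fin n)) : Set (Fin n)).Pairwise (Function.onFun Commute f)) :
    Finset.univ.noncommProd f hcomm = (List.ofFn f).prod := by
  rw [List.ofFn_eq_map, ← Finset.noncommProd_toFinset (List.finRange n) f
    (by rwa [List.toFinset_finRange]) (List.nodup_finRange n)]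
  simp only [List.toFinset_finRange]

section

variable {B : Type*} [Group B]

theorem mem_iSup_iff_exists_prod_ofFn {n : ℕ} {S : Fin n → Subgroup B}
    (hcomm : Pairwise fun i j => ∀ x y : B, x ∈ S i → y ∈ S j → Commute x y) {x : B} :
    x ∈ ⨆ i, S i ↔ ∃ f : Fin n → B, (∀ i, f i ∈ S i) ∧ (List.ofFn f).prod = x := by
  rw [← Subgroup.noncommPiCoprod_range (hcomm := hcomm)]
  constructor
  · rintro ⟨u, rfl⟩
    exact ⟨fun i => u i, fun i => (u i).2,
      (noncommProd_univ_eq_prod_ofFn _ _).symm.trans (Subgroup.noncommPiCoprod_apply hcomm u).symm⟩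
  · rintro ⟨f, hf, rfl⟩
    exact ⟨fun i => ⟨f i, hf i⟩,
      (Subgroup.noncommPiCoprod_apply hcomm _).trans (noncommProd_univ_eq_prod_ofFn _ _)⟩

theorem mem_iSup_conjSub_iff_exists_prod_ofFn {n : ℕ} {c : Fin n → B} {S : Fin n → Subgroup B}
    (hcomm : Pairwise fun i j =>
      ∀ x y : B, x ∈ conjSub (c i) (S i) → y ∈ conjSub (c j) (S j) → Commute x y) {x : B} :
    x ∈ ⨆ i, conjSub (c i) (S i) ↔
      ∃ a : Fin n → B, (∀ i, a i ∈ S i) ∧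
        (List.ofFn fun i => c i * a i * (c i)⁻¹).prod = x := by
  rw [mem_iSup_iff_exists_prod_ofFn hcomm]
  constructor
  · rintro ⟨f, hf, rfl⟩
    choose a ha hconj using hf
    exact ⟨a, ha, congrArg (fun f => (List.ofFn f).prod) (funext hconj)⟩
  · rintro ⟨a, ha, rfl⟩
    exact ⟨_, fun i => ⟨a i, ha i, rfl⟩, rfl⟩

theorem dmap_mulSingle {m : ℕ} {g : B} {G : Subgroup B} (i : Fin m)
    (x : conjSub (g ^ (i : ℕ)) G) : dmap m g G (Pi.mulSingle i x) = x := by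
  refine (prod_ofFn_eq_single i fun j hj => ?_).trans ?_
  · rw [Pi.mulSingle_eq_of_ne hj, OneMemClass.coe_one]
  · rw [Pi.mulSingle_eq_same]

theorem pairwise_commute_conjSub_of_dmap_mul {m : ℕ} {g : B} {G : Subgroup B}
    (hmul : ∀ u v, dmap m g G (u * v) = dmap m g G u * dmap m g G v) :
    Pairwise fun i j : Fin m => ∀ x y : B,
      x ∈ conjSub (g ^ (i : ℕ)) G → y ∈ conjSub (g ^ (j : ℕ)) G → Commute x y := by
  intro i j hij x y hx hy
  have hxy := (Pi.mulSingle_commute hij ⟨x, hx⟩ ⟨y, hy⟩).map (MonoidHom.mk' (dmap m g G) hmul)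
  simpa only [MonoidHom.mk'_apply, dmap_mulSingle] using hxy

theorem pairwise_commute_conjSub_mono {ι : Type*} {c : ι → B} {P G : Subgroup B} (hPG : P ≤ G)
    (hcomm : Pairwise fun i j =>
      ∀ x y : B, x ∈ conjSub (c i) G → y ∈ conjSub (c j) G → Commute x y) :
    Pairwise fun i j => ∀ x y : B, x ∈ conjSub (c i) P → y ∈ conjSub (c j) P → Commute x y :=
  hcomm.mono fun _ _ h x y hx hy => h x y (Subgroup.map_mono hPG hx) (Subgroup.map_mono hPG hy)

theorem exists_mem_inf_ker_mul_zpow {H : Type*} [Group H] {η : B →* H} {A : Subgroup B} {c : B}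
    (hc : c ∈ A) (hAη : A.map η ≤ Subgroup.zpowers (η c)) {x : B} (hx : x ∈ A) :
    ∃ y ∈ A ⊓ η.ker, ∃ k : ℤ, y * c ^ k = x := by
  rw [← MonoidHom.map_zpowers, Subgroup.map_le_map_iff, sup_comm] at hAη
  obtain ⟨y, hy, _, ⟨k, rfl⟩, rfl⟩ := Subgroup.mem_sup_of_normal_left.1 (hAη hx)
  exact ⟨y, ⟨(A.mul_mem_cancel_right (A.zpow_mem hc k)).1 hx, hy⟩, k, rfl⟩

theorem stmt_5_general {H : Type*} [Group H] (η : B →* H) (m : ℕ) [NeZero m] (g : B)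
    (G A : Subgroup B)
    (hcomm : Pairwise fun i j : Fin m => ∀ x y : B,
      x ∈ conjSub (g ^ (i : ℕ)) (A ⊓ G) → y ∈ conjSub (g ^ (j : ℕ)) (A ⊓ G) → Commute x y)
    (hAη : A.map η ≤ Subgroup.zpowers (η (g ^ m))) (hgmA : g ^ m ∈ A)
    (hK : A ⊓ η.ker = ⨆ i : Fin m, conjSub (g ^ (i : ℕ)) (A ⊓ G)) :
    thetaW m g G ''
        {p : WrZ ↥G m | (∀ i : Fin m, (p.left i : B) ∈ A) ∧
          (m : ℤ) ∣ Multiplicative.toAdd p.right}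
      = (A : Set B) := by
  refine Set.Subset.antisymm ?_ fun x hx => ?_
  · rintro _ ⟨p, ⟨hpA, k, hk⟩, rfl⟩
    have hprod := (mem_iSup_conjSub_iff_exists_prod_ofFn hcomm).2
      ⟨fun i => p.left i, fun i => ⟨hpA i, (p.left i).2⟩, rfl⟩
    refine A.mul_mem (hK.ge hprod).1 ?_
    rw [hk, zpow_mul, zpow_natCast]
    exact A.zpow_mem hgmA k
  · obtain ⟨y, hy, k, rfl⟩ := exists_mem_inf_ker_mul_zpow hgmA hAη hx
    obtain ⟨a, ha, rfl⟩ := (mem_iSup_conjSub_iff_exists_prod_ofFn hcomm).1 (hK.le hy)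
    refine ⟨⟨fun i => ⟨a i, (ha i).2⟩, Multiplicative.ofAdd (m * k)⟩,
      ⟨fun i => (ha i).1, k, rfl⟩, ?_⟩
    simp only [thetaW, toAdd_ofAdd, zpow_mul, zpow_natCast]

end

/-- In the situation of Statement 4 (so that `θ : G ≀ₘ ℤ → B` is a group
isomorphism), let `A ⊴ B` be a normal subgroup with `η(A) = mℤ`, `gᵐ ∈ A`, and such that
`K = A ∩ L` is generated by the conjugates `Pᵢ = gⁱ P g⁻ⁱ` of `P = A ∩ G`. Then `θ` maps
the subgroup `(Fin m → P) × mℤ` of `G ≀ₘ ℤ` onto `A`. -/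
theorem stmt_5 {B : Type*} [Group B] (η : B →* Multiplicative ℤ)
    (hsurj : Function.Surjective η) (m : ℕ) (hm : 1 ≤ m) [NeZero m] (g : B)
    (hg : η g = Multiplicative.ofAdd 1)
    (hcomm : ∀ v ∈ η.ker, Commute (g ^ m) v)
    (G : Subgroup B) (hGL : G ≤ η.ker)
    (hhom : ∀ u v : ∀ i : Fin m, ↥(conjSub (g ^ (i : ℕ)) G),
      dmap m g G (u * v) = dmap m g G u * dmap m g G v)
    (hinj : Function.Injective (dmap m g G))
    (hrange : Set.range (dmap m g G) = (η.ker : Set B))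
    (A : Subgroup B) (hA : A.Normal)
    (hAimg : A.map η = Subgroup.zpowers (Multiplicative.ofAdd (m : ℤ)))
    (hgmA : g ^ m ∈ A)
    (hK : A ⊓ η.ker = ⨆ i : Fin m, conjSub (g ^ (i : ℕ)) (A ⊓ G)) :
    thetaW m g G ''
        {p : WrZ ↥G m | (∀ i : Fin m, (p.left i : B) ∈ A) ∧
          (m : ℤ) ∣ Multiplicative.toAdd p.right}
      = (A : Set B) := by
  have hcommP := pairwise_commute_conjSub_mono (inf_le_right (a := A))
    (pairwise_commute_conjSub_of_dmap_mul hhom)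
  have hηgm : η (g ^ m) = Multiplicative.ofAdd (m : ℤ) := by
    rw [map_pow, hg, ← ofAdd_nsmul, nsmul_one]
  exact stmt_5_general η m g G A hcommP (hηgm ▸ hAimg.le) hgmA hK
end

section
/- Let B be a group, η : B → ℤ a surjective homomorphism with kernel L, m ≥ 1, and g ∈ B such that: (a) η(g) = 1 and g^{2m} commutes with every element of L; (b) there is a subgroup H ≤ L with g⁻ᵐ H gᵐ = H, and γ : H → H denotes the automorphism γ(h) = g⁻ᵐ h gᵐ (so γ ∘ γ = id on H by (a)); (c) there is a subgroup G ≤ L such that L is the internal direct product of the subgroups Gᵢ := gⁱ G g⁻ⁱ, i = 0, …, 2m−1, together with Hⱼ := gʲ H g⁻ʲ, j = 0, …, m−1. Then the map θ : (G, H) ≀_{γ,m} ℤ → B defined by θ(a, b; k) = (∏_{i=0}^{2m−1} gⁱ a(i) g⁻ⁱ · ∏_{j=0}^{m−1} gʲ b(j) g⁻ʲ) · gᵏ is a group isomorphism; moreover η(θ(a,b;k)) = k, so θ maps ((Fin 2m → G) × (Fin m → H)) × {0} onto L. -/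
instance twNeZero (m : ℕ) [NeZero m] : NeZero (2 * m) :=
  ⟨by have := NeZero.ne m; omega⟩

/-- The twisted shift automorphism `δ` of `(Fin (2m) → G) × (Fin m → H)`:
`δ(a,b) = (a', b')` with `a'(i) = a(i−1)` (mod 2m), `b'(j) = b(j−1)` for `j ≠ 0` and
`b'(0) = γ(b(m−1))`. -/
def twShift (G H : Type*) [Group G] [Group H] (m : ℕ) [NeZero m] (γ : MulAut H) :
    MulAut ((Fin (2 * m) → G) × (Fin m → H)) where
  toFun p := (fun i => p.1 (i - 1),
              fun j => if j = 0 then γ (p.2 (j - 1)) else p.2 (j - 1))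
  invFun p := (fun i => p.1 (i + 1),
              fun j => if j + 1 = 0 then γ.symm (p.2 (j + 1)) else p.2 (j + 1))
  left_inv p := by
    refine Prod.ext ?_ ?_
    · funext i; simp
    · funext j
      by_cases h : j + 1 = 0
      · simp [h, eq_neg_of_add_eq_zero_left h]
      · simp [h]
  right_inv p := by
    refine Prod.ext ?_ ?_
    · funext i; simp
    · funext j
      by_cases h : j = 0 <;> simp [h]
  map_mul' p q := by
    refine Prod.ext ?_ ?_
    · rfl
    · funext j
      by_cases h : j = 0 <;> simp [h]

/-- The twisted wreath product `(G, H) ≀_{γ,m} ℤ = ((Fin 2m → G) × (Fin m → H)) ⋊_δ ℤ`. -/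
abbrev TWrZ (G H : Type*) [Group G] [Group H] (m : ℕ) [NeZero m] (γ : MulAut H) :=
  ((Fin (2 * m) → G) × (Fin m → H))
    ⋊[zpowersHom (MulAut ((Fin (2 * m) → G) × (Fin m → H))) (twShift G H m γ)]
    Multiplicative ℤ

/-- The ordered-product map `(Π i, gⁱ G g⁻ⁱ) × (Π j, gʲ H g⁻ʲ) → B`,
`(x, y) ↦ x₀⋯x_{2m−1} · y₀⋯y_{m−1}`. -/
def dmap2 {B : Type*} [Group B] (m : ℕ) (g : B) (G H : Subgroup B) :
    ((∀ i : Fin (2 * m), ↥(conjSub (g ^ (i : ℕ)) G)) ×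
      (∀ j : Fin m, ↥(conjSub (g ^ (j : ℕ)) H))) → B :=
  fun u => (List.ofFn fun i => (u.1 i : B)).prod * (List.ofFn fun j => (u.2 j : B)).prod

/-- The map `θ : (G,H) ≀_{γ,m} ℤ → B`,
`θ(a, b; k) = (∏_{i<2m} gⁱ a(i) g⁻ⁱ · ∏_{j<m} gʲ b(j) g⁻ʲ) · gᵏ`. -/
def thetaTW {B : Type*} [Group B] (m : ℕ) [NeZero m] (g : B) (G H : Subgroup B)
    (γ : MulAut ↥H) : TWrZ ↥G ↥H m γ → B :=
  fun p =>
    (List.ofFn fun i : Fin (2 * m) =>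
        g ^ (i : ℕ) * ((p.left.1 i : B)) * (g ^ (i : ℕ))⁻¹).prod *
    (List.ofFn fun j : Fin m =>
        g ^ (j : ℕ) * ((p.left.2 j : B)) * (g ^ (j : ℕ))⁻¹).prod *
    g ^ (Multiplicative.toAdd p.right)

/-!
Conjugation by `g` moves the `i`-th factor of a product `x₀ · g x₁ g⁻¹ ⋯ gⁿ⁻¹ xₙ₋₁ g⁻⁽ⁿ⁻¹⁾` of
elements of the conjugates `gⁱ K g⁻ⁱ` to the `(i + 1)`-st place and turns the last one into
`gⁿ xₙ₋₁ g⁻ⁿ`. When `gⁿ` normalizes `K`, this lies in `K` again and can be moved to the front, since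
distinct factors commute. Thus conjugation by `g` on `L` is the cyclic shift twisted by conjugation
by `gⁿ`, which is trivial for `K = G`, `n = 2m` and equals `γ` for `K = H`, `n = m`. As `k ↦ gᵏ`
splits `η`, the group `B` is the corresponding semidirect product.
-/

section SplitExtension

variable {N Q E : Type*} [Group N] [Group Q] [Group E]

theorem comp_zpow_eq_zpow_comp {f : N →* E} {σ : MulAut N} {τ : MulAut E}
    (h : f.comp σ.toMonoidHom = τ.toMonoidHom.comp f) (k : ℤ) :
    f.comp (σ ^ k).toMonoidHom = (τ ^ k).toMonoidHom.comp f := by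
  have h_apply (x : N) : f (σ x) = τ (f x) := DFunLike.congr_fun h x
  have h_inv (x : N) : f (σ⁻¹ x) = τ⁻¹ (f x) := by
    rw [MulAut.inv_apply, MulAut.inv_apply, MulEquiv.eq_symm_apply, ← h_apply,
      MulEquiv.apply_symm_apply]
  ext x
  change f ((σ ^ k) x) = (τ ^ k) (f x)
  induction k generalizing x with
  | zero => simp
  | succ k ih => rw [zpow_add_one, zpow_add_one, MulAut.mul_apply, MulAut.mul_apply, ih, h_apply]
  | pred k ih => rw [zpow_sub_one, zpow_sub_one, MulAut.mul_apply, MulAut.mul_apply, ih, h_inv]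

variable {act : Q →* MulAut N}

theorem rightHom_comp_semidirectProduct_lift (S : GroupExtension N E Q) {s : Q →* E}
    (h : ∀ q, S.inl.comp (act q).toMonoidHom = (MulAut.conj (s q)).toMonoidHom.comp S.inl)
    (hs : S.rightHom.comp s = MonoidHom.id Q) :
    S.rightHom.comp (SemidirectProduct.lift S.inl s h) = SemidirectProduct.rightHom :=
  SemidirectProduct.hom_ext
    (by rw [MonoidHom.comp_assoc, SemidirectProduct.lift_comp_inl, S.rightHom_comp_inl,
      SemidirectProduct.rightHom_comp_inl])
    (by rw [MonoidHom.comp_assoc, SemidirectProduct.lift_comp_inr, hs,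
      SemidirectProduct.rightHom_comp_inr])

theorem semidirectProduct_lift_bijective (S : GroupExtension N E Q) {s : Q →* E}
    (h : ∀ q, S.inl.comp (act q).toMonoidHom = (MulAut.conj (s q)).toMonoidHom.comp S.inl)
    (hs : S.rightHom.comp s = MonoidHom.id Q) :
    Function.Bijective (SemidirectProduct.lift S.inl s h) :=
  (GroupExtension.Equiv.ofMonoidHom (S := SemidirectProduct.toGroupExtension act) (S' := S) _
    (SemidirectProduct.lift_comp_inl S.inl s h)
    (rightHom_comp_semidirectProduct_lift S h hs)).bijective

theorem semidirectProduct_lift_image_right_eq_one (f : N →* E) (s : Q →* E)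
    (h : ∀ q, f.comp (act q).toMonoidHom = (MulAut.conj (s q)).toMonoidHom.comp f) :
    SemidirectProduct.lift f s h '' {p | p.right = 1} = f.range := by
  have h_inl : {p : N ⋊[act] Q | p.right = 1} = Set.range SemidirectProduct.inl :=
    (congrArg SetLike.coe SemidirectProduct.range_inl_eq_ker_rightHom).symm
  rw [h_inl, ← Set.range_comp, ← MonoidHom.coe_comp, SemidirectProduct.lift_comp_inl,
    MonoidHom.coe_range]

end SplitExtension

section ConjProd

variable {B : Type*} [Group B] {n : ℕ}

/-- The ordered product `x₀ · g x₁ g⁻¹ ⋯ gⁿ⁻¹ xₙ₋₁ g⁻⁽ⁿ⁻¹⁾`; the `G`-part and the `H`-part of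
`thetaTW` are of this form. -/
def conjProd (g : B) (x : Fin n → B) : B :=
  (List.ofFn fun i => MulAut.conj (g ^ (i : ℕ)) (x i)).prod

/-- The cyclic shift of a tuple, with `γ` applied to the entry that wraps around to position `0`.
The two components of `twShift` are of this form, with `γ` the identity in the first one. -/
def twistedShift {α : Type*} [NeZero n] (γ : α → α) (x : Fin n → α) : Fin n → α :=
  fun i => if i = 0 then γ (x (i - 1)) else x (i - 1)

theorem twistedShift_succ {α : Type*} (γ : α → α) (x : Fin (n + 1) → α) :
    twistedShift γ x = Fin.cons (γ (x (Fin.last n))) (Fin.init x) := by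
  funext i
  cases i using Fin.cases with
  | zero =>
    have h_last : (0 - 1 : Fin (n + 1)) = Fin.last n := sub_eq_of_eq_add (Fin.last_add_one n).symm
    simp only [twistedShift, if_true, h_last, Fin.cons_zero]
  | succ i =>
    have h_pred : i.succ - 1 = i.castSucc := sub_eq_of_eq_add Fin.coeSucc_eq_succ.symm
    simp only [twistedShift, Fin.succ_ne_zero, if_false, h_pred, Fin.cons_succ, Fin.init]

theorem twShift_apply {G H : Type*} [Group G] [Group H] {m : ℕ} [NeZero m] (γ : MulAut H)
    (p : (Fin (2 * m) → G) × (Fin m → H)) :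
    twShift G H m γ p = (twistedShift id p.1, twistedShift γ p.2) :=
  Prod.ext (funext fun _ => (ite_self _).symm) rfl

theorem conj_conjProd (g : B) (x : Fin n → B) :
    MulAut.conj g (conjProd g x) =
      (List.ofFn fun i : Fin n => MulAut.conj (g ^ (i + 1 : ℕ)) (x i)).prod := by
  simp only [conjProd, map_list_prod, List.map_ofFn, Function.comp_def, pow_succ', map_mul,
    MulAut.mul_apply]

theorem conjProd_cons (g b : B) (x : Fin n → B) :
    conjProd g (Fin.cons b x : Fin (n + 1) → B) = b * MulAut.conj g (conjProd g x) := by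
  rw [conj_conjProd]
  simp [conjProd, List.ofFn_succ]

theorem conj_conjProd_eq_mul_last (g : B) (x : Fin (n + 1) → B) :
    MulAut.conj g (conjProd g x) =
      MulAut.conj g (conjProd g (Fin.init x)) * MulAut.conj (g ^ (n + 1)) (x (Fin.last n)) := by
  simp only [conj_conjProd, List.ofFn_succ_last, List.prod_append, List.prod_singleton, Fin.init,
    Fin.val_castSucc, Fin.val_last]

variable {g : B} {K : Subgroup B}

theorem conjProd_val_comp_one : conjProd g (Subtype.val ∘ (1 : Fin n → K)) = 1 := by
  simp [conjProd]

theorem commute_conj_conjProd (f : (Fin (n + 1) → K) →* B)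
    (hf : ∀ x, f x = conjProd g (Subtype.val ∘ x)) (k : K) (x : Fin n → K) :
    Commute (k : B) (MulAut.conj g (conjProd g (Subtype.val ∘ x))) := by
  -- Tuples with disjoint supports commute, and `f` sends these two to the elements in question.
  have h_commute : Commute (Fin.cons k 1 : Fin (n + 1) → K) (Fin.cons 1 x) :=
    Pi.commute_iff.mpr <| Fin.cases (Commute.one_right k) fun i => Commute.one_left (x i)
  have h_head : f (Fin.cons k 1) = k := by
    rw [hf, Fin.comp_cons, conjProd_cons, conjProd_val_comp_one, map_one, mul_one]
  have h_tail : f (Fin.cons 1 x) = MulAut.conj g (conjProd g (Subtype.val ∘ x)) := by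
    rw [hf, Fin.comp_cons, conjProd_cons, Subgroup.coe_one, one_mul]
  simpa only [h_head, h_tail] using h_commute.map f

theorem map_twistedShift [NeZero n] (f : (Fin n → K) →* B)
    (hf : ∀ x, f x = conjProd g (Subtype.val ∘ x)) {γ : K → K}
    (hγ : ∀ k, (γ k : B) = MulAut.conj (g ^ n) k) (x : Fin n → K) :
    f (twistedShift γ x) = MulAut.conj g (f x) := by
  obtain ⟨n, rfl⟩ := Nat.exists_eq_add_one_of_ne_zero (NeZero.ne n)
  calc f (twistedShift γ x)
      = γ (x (Fin.last n)) * MulAut.conj g (conjProd g (Subtype.val ∘ Fin.init x)) := by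
        rw [hf, twistedShift_succ, Fin.comp_cons, conjProd_cons]
    _ = MulAut.conj g (conjProd g (Subtype.val ∘ Fin.init x)) * γ (x (Fin.last n)) :=
        commute_conj_conjProd f hf _ _
    _ = MulAut.conj g (f x) := by
        rw [hγ, hf, conj_conjProd_eq_mul_last, Fin.comp_init, Function.comp_apply]

end ConjProd

theorem inv_mul_mul_eq_conj_of_commute_sq {B : Type*} [Group B] {a b : B}
    (h : Commute (a ^ 2) b) : a⁻¹ * b * a = MulAut.conj a b :=
  calc a⁻¹ * b * a = a⁻¹ * (b * a ^ 2) * a⁻¹ := by group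
    _ = a⁻¹ * (a ^ 2 * b) * a⁻¹ := by rw [h.eq]
    _ = MulAut.conj a b := by rw [MulAut.conj_apply]; group

section InternalProduct

variable {B : Type*} [Group B] {m : ℕ} {g : B} {G H : Subgroup B}

theorem map_twShift [NeZero m] (φ : (Fin (2 * m) → G) × (Fin m → H) →* B)
    (hφ : ∀ p, φ p = conjProd g (Subtype.val ∘ p.1) * conjProd g (Subtype.val ∘ p.2))
    (hG : ∀ x ∈ G, Commute (g ^ (2 * m)) x) {γ : MulAut H}
    (hγ : ∀ h, (γ h : B) = MulAut.conj (g ^ m) h) (p : (Fin (2 * m) → G) × (Fin m → H)) :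
    φ (twShift G H m γ p) = MulAut.conj g (φ p) := by
  have h_inl (a) : φ.comp (MonoidHom.inl _ _) a = conjProd g (Subtype.val ∘ a) := by
    rw [MonoidHom.comp_apply, MonoidHom.inl_apply, hφ, conjProd_val_comp_one, mul_one]
  have h_inr (b) : φ.comp (MonoidHom.inr _ _) b = conjProd g (Subtype.val ∘ b) := by
    rw [MonoidHom.comp_apply, MonoidHom.inr_apply, hφ, conjProd_val_comp_one, one_mul]
  have h_id (x : G) : ((id x : G) : B) = MulAut.conj (g ^ (2 * m)) x := by
    rw [MulAut.conj_apply, (hG x x.2).eq, mul_inv_cancel_right, id]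
  rw [twShift_apply, hφ, hφ p, ← h_inl, ← h_inl, ← h_inr, ← h_inr, map_mul,
    map_twistedShift _ h_inl h_id, map_twistedShift _ h_inr hγ]

/-- The isomorphism from the abstract product onto the product of the conjugates `gⁱ G g⁻ⁱ` and
`gʲ H g⁻ʲ`, given by conjugation by `gⁱ` and `gʲ` on each coordinate. -/
def conjEquiv (m : ℕ) (g : B) (G H : Subgroup B) :
    (Fin (2 * m) → G) × (Fin m → H) ≃*
      (∀ i : Fin (2 * m), conjSub (g ^ (i : ℕ)) G) × (∀ j : Fin m, conjSub (g ^ (j : ℕ)) H) :=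
  MulEquiv.prodCongr
    (MulEquiv.piCongrRight fun i => (MulAut.conj (g ^ (i : ℕ))).subgroupMap G)
    (MulEquiv.piCongrRight fun j => (MulAut.conj (g ^ (j : ℕ))).subgroupMap H)

/-- The extension `1 → (Fin (2m) → G) × (Fin m → H) → B → Q → 1` obtained when the kernel of
`η : B → Q` is the internal direct product of the `gⁱ G g⁻ⁱ` and the `gʲ H g⁻ʲ`. -/
def conjExtension {Q : Type*} [Group Q] (η : B →* Q) (hsurj : Function.Surjective η)
    (hhom : ∀ u v, dmap2 m g G H (u * v) = dmap2 m g G H u * dmap2 m g G H v)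
    (hinj : Function.Injective (dmap2 m g G H))
    (hrange : Set.range (dmap2 m g G H) = (η.ker : Set B)) :
    GroupExtension ((Fin (2 * m) → G) × (Fin m → H)) B Q where
  inl := (MonoidHom.mk' (dmap2 m g G H) hhom).comp (conjEquiv m g G H).toMonoidHom
  rightHom := η
  inl_injective := hinj.comp (conjEquiv m g G H).injective
  range_inl_eq_ker_rightHom :=
    SetLike.coe_injective <| ((conjEquiv m g G H).surjective.range_comp _).trans hrange
  rightHom_surjective := hsurj

end InternalProduct

/-- Let `η : B → ℤ` be surjective with kernel `L`, `m ≥ 1`, `g ∈ B` with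
`η g = 1` and `g^{2m}` commuting with `L`; let `H ≤ L` with `g⁻ᵐ H gᵐ = H` and
`γ : H → H`, `γ(h) = g⁻ᵐ h gᵐ`, the induced automorphism; and let `G ≤ L` be such that `L`
is the internal direct product of `Gᵢ = gⁱ G g⁻ⁱ` (`i < 2m`) and `Hⱼ = gʲ H g⁻ʲ` (`j < m`)
(the ordered-product map is an injective homomorphism with range `L`). Then
`θ : (G,H) ≀_{γ,m} ℤ → B` is a group isomorphism with `η (θ (a,b;k)) = k`, so `θ` maps
`((Fin 2m → G) × (Fin m → H)) × {0}` onto `L`. -/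
theorem stmt_6 {B : Type*} [Group B] (η : B →* Multiplicative ℤ)
    (hsurj : Function.Surjective η) (m : ℕ) (hm : 1 ≤ m) [NeZero m] (g : B)
    (hg : η g = Multiplicative.ofAdd 1)
    (hcomm : ∀ v ∈ η.ker, Commute (g ^ (2 * m)) v)
    (H : Subgroup B) (hHL : H ≤ η.ker)
    (γ : MulAut ↥H)
    (hγ : ∀ h : ↥H, (γ h : B) = (g ^ m)⁻¹ * ↑h * g ^ m)
    (G : Subgroup B) (hGL : G ≤ η.ker)
    (hhom : ∀ u v, dmap2 m g G H (u * v) = dmap2 m g G H u * dmap2 m g G H v)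
    (hinj : Function.Injective (dmap2 m g G H))
    (hrange : Set.range (dmap2 m g G H) = (η.ker : Set B)) :
    (∀ x y : TWrZ ↥G ↥H m γ,
        thetaTW m g G H γ (x * y) = thetaTW m g G H γ x * thetaTW m g G H γ y) ∧
    Function.Bijective (thetaTW m g G H γ) ∧
    (∀ p : TWrZ ↥G ↥H m γ, η (thetaTW m g G H γ p) = p.right) ∧
    thetaTW m g G H γ '' {p : TWrZ ↥G ↥H m γ | p.right = 1} = (η.ker : Set B) := by
  let S := conjExtension η hsurj hhom hinj hrange
  let s := zpowersHom B g
  have hs : S.rightHom.comp s = MonoidHom.id (Multiplicative ℤ) :=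
    MonoidHom.ext_mint ((congrArg η (zpow_one g)).trans hg)
  have hγ_conj (h : H) : (γ h : B) = MulAut.conj (g ^ m) h :=
    (hγ h).trans <| inv_mul_mul_eq_conj_of_commute_sq <| pow_mul' g 2 m ▸ hcomm h (hHL h.2)
  have hshift : S.inl.comp (twShift G H m γ).toMonoidHom = (MulAut.conj g).toMonoidHom.comp S.inl :=
    MonoidHom.ext <| map_twShift S.inl (fun _ => rfl) (fun x hx => hcomm x (hGL hx)) hγ_conj
  have hconj (k : Multiplicative ℤ) :
      S.inl.comp (zpowersHom _ (twShift G H m γ) k).toMonoidHom =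
        (MulAut.conj (s k)).toMonoidHom.comp S.inl := by
    rw [zpowersHom_apply, zpowersHom_apply, map_zpow]
    exact comp_zpow_eq_zpow_comp hshift _
  exact ⟨map_mul (SemidirectProduct.lift S.inl s hconj),
    semidirectProduct_lift_bijective S hconj hs,
    DFunLike.congr_fun (rightHom_comp_semidirectProduct_lift S hconj hs),
    (semidirectProduct_lift_image_right_eq_one S.inl s hconj).trans
      (congrArg SetLike.coe S.range_inl_eq_ker_rightHom)⟩
end

section
/- Let B be a group, η : B → ℤ a surjective homomorphism with kernel L, m ≥ 1, g ∈ B, and G, H ≤ L satisfying: (a) η(g) = 1 and g^{2m} commutes with every element of L; (b) g⁻ᵐ H gᵐ = H, with γ : H → H the automorphism γ(h) = g⁻ᵐ h gᵐ; (c) L is the internal direct product of Gᵢ := gⁱ G g⁻ⁱ, i = 0, …, 2m−1, and Hⱼ := gʲ H g⁻ʲ, j = 0, …, m−1, so that θ : (G, H) ≀_{γ,m} ℤ → B, θ(a,b;k) = (∏_{i=0}^{2m−1} gⁱ a(i) g⁻ⁱ · ∏_{j=0}^{m−1} gʲ b(j) g⁻ʲ) · gᵏ, is a group isomorphism. Suppose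 in addition A is a normal subgroup of B such that: (d) η(A) = 2mℤ and g^{2m} ∈ A; (e) K := A ∩ L is generated by the subgroups Pᵢ := gⁱ P g⁻ⁱ, i = 0, …, 2m−1, and Qⱼ := gʲ Q g⁻ʲ, j = 0, …, m−1, where P := A ∩ G and Q := A ∩ H. Then θ maps the subgroup ((Fin 2m → P) × (Fin m → Q)) × 2mℤ onto A. -/
/-!
Since `g²ᵐ ∈ A` and `η(A) = ⟨η(g²ᵐ)⟩`, the modular law gives `A = (A ∩ ker η) · ⟨g²ᵐ⟩`. The image
under `θ` is `R · ⟨g²ᵐ⟩`, where `R` is the set of ordered products over the conjugates of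
`P = A ∩ G` and `Q = A ∩ H`. As the ordered product is multiplicative, `R` is the subgroup these
conjugates generate, which is `A ∩ ker η`.
-/

theorem prod_ofFn_eq_of_forall_ne {M : Type*} [Monoid M] {n : ℕ} (f : Fin n → M) (i : Fin n)
    (hf : ∀ j, j ≠ i → f j = 1) : (List.ofFn f).prod = f i := by
  induction n with
  | zero => exact i.elim0
  | succ n ih =>
    rw [List.ofFn_succ, List.prod_cons]
    cases i using Fin.cases with
    | zero =>
      have htail : ∀ x ∈ List.ofFn fun j : Fin n => f j.succ, x = 1 :=
        List.forall_mem_ofFn_iff.2 fun j => hf _ j.succ_ne_zero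
      rw [List.prod_eq_one htail, mul_one]
    | succ i =>
      rw [hf 0 i.succ_ne_zero.symm, one_mul]
      exact ih (fun j => f j.succ) i fun j hj => hf _ ((Fin.succ_injective n).ne hj)

theorem prod_ofFn_coe_mulSingle {M S : Type*} [Monoid M] [SetLike S M] [SubmonoidClass S M] {n : ℕ}
    {N : Fin n → S} (i : Fin n) (x : N i) :
    (List.ofFn fun k => ((Pi.mulSingle i x : ∀ k, N k) k : M)).prod = x := by
  have hne : ∀ k, k ≠ i → ((Pi.mulSingle i x : ∀ k, N k) k : M) = 1 := fun k hk => by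
    rw [Pi.mulSingle_eq_of_ne hk, OneMemClass.coe_one]
  rw [prod_ofFn_eq_of_forall_ne _ i hne, Pi.mulSingle_eq_same]

open scoped Pointwise in
theorem coe_inf_ker_mul_zpowers {B C : Type*} [Group B] [Group C] (η : B →* C) {A : Subgroup B}
    {c : B} (hc : c ∈ A) (hA : A.map η ≤ Subgroup.zpowers (η c)) :
    ((A ⊓ η.ker : Subgroup B) : Set B) * (Subgroup.zpowers c : Set B) = A := by
  have hle : A ≤ η.ker ⊔ Subgroup.zpowers c := by
    rwa [sup_comm, ← Subgroup.comap_map_eq, ← Subgroup.map_le_iff_le_comap, MonoidHom.map_zpowers]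
  rw [Subgroup.inf_mul_assoc _ _ _ (Subgroup.zpowers_le.2 hc), ← Subgroup.normal_mul]
  exact Set.inter_eq_left.2 hle

section Conjugates

variable {B : Type*} [Group B] {m : ℕ} {g : B} {G H : Subgroup B}

theorem mem_conjSub {x : B} {S : Subgroup B} : x ∈ conjSub g S ↔ ∃ s ∈ S, g * s * g⁻¹ = x :=
  Iff.rfl

theorem dmap2_mulSingle_one (i : Fin (2 * m)) (x : conjSub (g ^ (i : ℕ)) G) :
    dmap2 m g G H (Pi.mulSingle i x, 1) = x := by
  simpa [dmap2] using
    prod_ofFn_coe_mulSingle (N := fun k : Fin (2 * m) => conjSub (g ^ (k : ℕ)) G) i x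

theorem dmap2_one_mulSingle (j : Fin m) (y : conjSub (g ^ (j : ℕ)) H) :
    dmap2 m g G H (1, Pi.mulSingle j y) = y := by
  simpa [dmap2] using
    prod_ofFn_coe_mulSingle (N := fun k : Fin m => conjSub (g ^ (k : ℕ)) H) j y

theorem dmap2_mem_iSup_sup_iSup
    (u : (∀ i : Fin (2 * m), conjSub (g ^ (i : ℕ)) G) × (∀ j : Fin m, conjSub (g ^ (j : ℕ)) H)) :
    dmap2 m g G H u ∈
      (⨆ i : Fin (2 * m), conjSub (g ^ (i : ℕ)) G) ⊔ ⨆ j : Fin m, conjSub (g ^ (j : ℕ)) H :=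
  Subgroup.mul_mem_sup
    (list_prod_mem <| List.forall_mem_ofFn_iff.2 fun i =>
      Subgroup.mem_iSup_of_mem i (u.1 i).2)
    (list_prod_mem <| List.forall_mem_ofFn_iff.2 fun j =>
      Subgroup.mem_iSup_of_mem j (u.2 j).2)

theorem range_dmap2 (hmul : ∀ u v, dmap2 m g G H (u * v) = dmap2 m g G H u * dmap2 m g G H v) :
    Set.range (dmap2 m g G H) =
      ((⨆ i : Fin (2 * m), conjSub (g ^ (i : ℕ)) G) ⊔ ⨆ j : Fin m, conjSub (g ^ (j : ℕ)) H :
        Subgroup B) := by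
  have hle : (⨆ i : Fin (2 * m), conjSub (g ^ (i : ℕ)) G) ⊔ ⨆ j : Fin m, conjSub (g ^ (j : ℕ)) H ≤
      (MonoidHom.mk' (dmap2 m g G H) hmul).range :=
    sup_le (iSup_le fun i x hx => ⟨_, dmap2_mulSingle_one i ⟨x, hx⟩⟩)
      (iSup_le fun j y hy => ⟨_, dmap2_one_mulSingle j ⟨y, hy⟩⟩)
  exact (Set.range_subset_iff.2 dmap2_mem_iSup_sup_iSup).antisymm hle

theorem dmap2_mul_of_le {P Q : Subgroup B} (hP : P ≤ G) (hQ : Q ≤ H)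
    (hmul : ∀ u v, dmap2 m g G H (u * v) = dmap2 m g G H u * dmap2 m g G H v)
    (u v : (∀ i : Fin (2 * m), conjSub (g ^ (i : ℕ)) P) ×
      (∀ j : Fin m, conjSub (g ^ (j : ℕ)) Q)) :
    dmap2 m g P Q (u * v) = dmap2 m g P Q u * dmap2 m g P Q v :=
  hmul
    (fun i => Subgroup.inclusion (Subgroup.map_mono hP) (u.1 i),
      fun j => Subgroup.inclusion (Subgroup.map_mono hQ) (u.2 j))
    (fun i => Subgroup.inclusion (Subgroup.map_mono hP) (v.1 i),
      fun j => Subgroup.inclusion (Subgroup.map_mono hQ) (v.2 j))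

open scoped Pointwise in
theorem thetaTW_image_setOf [NeZero m] (γ : MulAut H) (A : Subgroup B) (n : ℕ) :
    thetaTW m g G H γ ''
        {p : TWrZ G H m γ |
          (∀ i : Fin (2 * m), (p.left.1 i : B) ∈ A) ∧
          (∀ j : Fin m, (p.left.2 j : B) ∈ A) ∧
          (n : ℤ) ∣ Multiplicative.toAdd p.right}
      = Set.range (dmap2 m g (A ⊓ G) (A ⊓ H)) * (Subgroup.zpowers (g ^ n) : Set B) := by
  apply Set.Subset.antisymm
  · rintro _ ⟨p, ⟨ha, hb, k, hk⟩, rfl⟩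
    refine Set.mul_mem_mul
      ⟨(fun i => ⟨_, mem_conjSub.2 ⟨p.left.1 i, ⟨ha i, SetLike.coe_mem _⟩, rfl⟩⟩,
        fun j => ⟨_, mem_conjSub.2 ⟨p.left.2 j, ⟨hb j, SetLike.coe_mem _⟩, rfl⟩⟩), rfl⟩ ⟨k, ?_⟩
    simp only [hk, zpow_mul, zpow_natCast]
  · rintro _ ⟨_, ⟨u, rfl⟩, _, ⟨k, rfl⟩, rfl⟩
    choose a haP ha using fun i => mem_conjSub.1 (u.1 i).2
    choose b hbQ hb using fun j => mem_conjSub.1 (u.2 j).2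
    refine ⟨⟨(fun i => ⟨a i, (haP i).2⟩, fun j => ⟨b j, (hbQ j).2⟩),
      Multiplicative.ofAdd (n * k)⟩, ⟨fun i => (haP i).1, fun j => (hbQ j).1, k, rfl⟩, ?_⟩
    simp only [thetaTW, dmap2, ha, hb, toAdd_ofAdd, zpow_mul, zpow_natCast]

end Conjugates

theorem stmt_8_general {B C : Type*} [Group B] [Group C] (η : B →* C) {m : ℕ} [NeZero m] {g : B}
    {G H : Subgroup B} (γ : MulAut H) {A : Subgroup B} {n : ℕ}
    (hmul : ∀ u v, dmap2 m g (A ⊓ G) (A ⊓ H) (u * v) =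
      dmap2 m g (A ⊓ G) (A ⊓ H) u * dmap2 m g (A ⊓ G) (A ⊓ H) v)
    (hAimg : A.map η ≤ Subgroup.zpowers (η (g ^ n))) (hgA : g ^ n ∈ A)
    (hK : A ⊓ η.ker =
      (⨆ i : Fin (2 * m), conjSub (g ^ (i : ℕ)) (A ⊓ G)) ⊔
      (⨆ j : Fin m, conjSub (g ^ (j : ℕ)) (A ⊓ H))) :
    thetaTW m g G H γ ''
        {p : TWrZ G H m γ |
          (∀ i : Fin (2 * m), (p.left.1 i : B) ∈ A) ∧
          (∀ j : Fin m, (p.left.2 j : B) ∈ A) ∧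
          (n : ℤ) ∣ Multiplicative.toAdd p.right}
      = (A : Set B) := by
  rw [thetaTW_image_setOf, range_dmap2 hmul, ← hK, coe_inf_ker_mul_zpowers η hgA hAimg]

/-- In the situation of Statement 6 (so `θ : (G,H) ≀_{γ,m} ℤ → B` is a group
isomorphism), let `A ⊴ B` be normal with `η(A) = 2mℤ`, `g^{2m} ∈ A`, and such that
`K = A ∩ L` is generated by the conjugates `Pᵢ = gⁱ P g⁻ⁱ` (`i < 2m`) of `P = A ∩ G`
together with `Qⱼ = gʲ Q g⁻ʲ` (`j < m`) of `Q = A ∩ H`. Then `θ` maps the subgroup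
`((Fin 2m → P) × (Fin m → Q)) × 2mℤ` onto `A`. -/
theorem stmt_8 {B : Type*} [Group B] (η : B →* Multiplicative ℤ)
    (hsurj : Function.Surjective η) (m : ℕ) (hm : 1 ≤ m) [NeZero m] (g : B)
    (hg : η g = Multiplicative.ofAdd 1)
    (hcomm : ∀ v ∈ η.ker, Commute (g ^ (2 * m)) v)
    (H : Subgroup B) (hHL : H ≤ η.ker)
    (γ : MulAut ↥H)
    (hγ : ∀ h : ↥H, (γ h : B) = (g ^ m)⁻¹ * ↑h * g ^ m)
    (G : Subgroup B) (hGL : G ≤ η.ker)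
    (hhom : ∀ u v, dmap2 m g G H (u * v) = dmap2 m g G H u * dmap2 m g G H v)
    (hinj : Function.Injective (dmap2 m g G H))
    (hrange : Set.range (dmap2 m g G H) = (η.ker : Set B))
    (A : Subgroup B) (hA : A.Normal)
    (hAimg : A.map η = Subgroup.zpowers (Multiplicative.ofAdd ((2 * m : ℕ) : ℤ)))
    (hgA : g ^ (2 * m) ∈ A)
    (hK : A ⊓ η.ker =
      (⨆ i : Fin (2 * m), conjSub (g ^ (i : ℕ)) (A ⊓ G)) ⊔
      (⨆ j : Fin m, conjSub (g ^ (j : ℕ)) (A ⊓ H))) :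
    thetaTW m g G H γ ''
        {p : TWrZ ↥G ↥H m γ |
          (∀ i : Fin (2 * m), (p.left.1 i : B) ∈ A) ∧
          (∀ j : Fin m, (p.left.2 j : B) ∈ A) ∧
          ((2 * m : ℕ) : ℤ) ∣ Multiplicative.toAdd p.right}
      = (A : Set B) := by
  have hηg : η (g ^ (2 * m)) = Multiplicative.ofAdd ((2 * m : ℕ) : ℤ) := by
    rw [map_pow, hg, ← ofAdd_nsmul, nsmul_one]
  exact stmt_8_general η γ (dmap2_mul_of_le inf_le_right inf_le_right hhom)
    (hAimg.trans_le (by rw [hηg])) hgA hK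
end

section
/- Let Y be a set, let ν : Y × Bool → Y × Bool be the involution ν(y, ε) = (y, ¬ε), let b ≥ 1, and let σ be a bijection of Y × Bool such that σ ∘ ν = ν ∘ σ, σ^b = id, and for every k with 1 ≤ k ≤ b−1 the map σ^k has no fixed point. Then for every (y, ε) ∈ Y × Bool exactly one of the following holds: (T1) the first components of the b points (y,ε), σ(y,ε), σ²(y,ε), …, σ^{b−1}(y,ε) are pairwise distinct; or (T2) b is even, say b = 2m, σ^m(y, ε) = (y, ¬ε), and the first components of the m points (y,ε), σ(y,ε), …, σ^{m−1}(y,ε) are pairwise distinct. -/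
/-!
Let `b` be the period of `p` under `σ`. Distinct points of the orbit of `p` have the same first
component only if they differ by the flip `ν`. Since `ν` commutes with `σ`, such a coincidence can
be moved back along the orbit to an equation `(σ ^ d) p = ν p` with `0 < d < b`. Applying `σ ^ d`
once more gives `(σ ^ (2 * d)) p = p`, so `b ∣ 2 * d` and hence `b = 2 * d`: the flip is met at half
the period or not at all.
-/

open Function

section

variable {α β : Type*} {σ ν : α → α} {π : α → β} {p : α}

theorem minimalPeriod_eq_of_forall_iterate_ne {n : ℕ} (hn : 0 < n) (hper : IsPeriodicPt σ n p)
    (hne : ∀ k, 0 < k → k < n → σ^[k] p ≠ p) : minimalPeriod σ p = n := by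
  refine (hper.minimalPeriod_le hn).eq_of_not_lt fun hlt => ?_
  exact hne _ (hper.minimalPeriod_pos hn) hlt iterate_minimalPeriod

theorem minimalPeriod_eq_two_mul_of_iterate_eq (hν : Involutive ν) (hσν : Function.Commute σ ν)
    {d : ℕ} (hd : 0 < d) (hlt : d < minimalPeriod σ p) (hflip : σ^[d] p = ν p) :
    minimalPeriod σ p = 2 * d := by
  have hdouble : IsPeriodicPt σ (2 * d) p :=
    calc σ^[2 * d] p = σ^[d] (σ^[d] p) := by rw [two_mul, iterate_add_apply]
      _ = ν (σ^[d] p) := by rw [hflip, (hσν.iterate_left d).eq, hflip]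
      _ = p := by rw [hflip, hν p]
  exact (Nat.eq_of_dvd_of_lt_two_mul (by lia) hdouble.minimalPeriod_dvd (by lia)).symm

theorem iterate_sub_eq_of_iterate_eq (hσν : Function.Commute σ ν) (hp : p ∈ periodicPts σ)
    {i j : ℕ} (hij : i ≤ j) (h : σ^[j] p = ν (σ^[i] p)) : σ^[j - i] p = ν p := by
  obtain ⟨n, hn, hper⟩ := hp
  have hper' : IsPeriodicPt σ n (ν p) := hper.map hσν.symm
  refine ((hper.apply_iterate (j - i)).iterate i).eq_of_apply_eq_same (hper'.iterate i) hn ?_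
  rw [← iterate_add_apply, Nat.add_sub_cancel' hij, h, (hσν.iterate_left i).eq]

theorem injective_comp_iterate_iff (hσν : Function.Commute σ ν)
    (hπ : ∀ x y, π x = π y ↔ x = y ∨ x = ν y) {n : ℕ} (hn : n ≤ minimalPeriod σ p) :
    Injective (fun k : Fin n => π (σ^[k] p)) ↔ ∀ d, 0 < d → d < n → σ^[d] p ≠ ν p := by
  constructor
  · intro hinj d hd hdn hflip
    have heq : (⟨d, hdn⟩ : Fin n) = ⟨0, by lia⟩ := hinj ((hπ _ _).2 (.inr hflip))
    exact hd.ne' (congrArg Fin.val heq)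
  · intro hne
    refine .of_lt_imp_ne fun i j hij hπij => ?_
    have hp : p ∈ periodicPts σ := minimalPeriod_pos_iff_mem_periodicPts.1 (by lia)
    rcases (hπ _ _).1 hπij.symm with heq | hflip
    · exact hij.ne' (Fin.ext (iterate_injOn_Iio_minimalPeriod (j.2.trans_le hn)
        (i.2.trans_le hn) heq))
    · exact hne (j - i) (by lia) (by lia) (iterate_sub_eq_of_iterate_eq hσν hp hij.le hflip)

theorem stmt_10_general (hν : Involutive ν) (hσν : Function.Commute σ ν)
    (hπ : ∀ x y, π x = π y ↔ x = y ∨ x = ν y) (hp : p ∈ periodicPts σ) :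
    Xor (Injective fun k : Fin (minimalPeriod σ p) => π (σ^[k] p))
      (∃ m, minimalPeriod σ p = 2 * m ∧ σ^[m] p = ν p ∧
        Injective fun k : Fin m => π (σ^[k] p)) := by
  have hpos : 0 < minimalPeriod σ p := minimalPeriod_pos_of_mem_periodicPts hp
  rw [xor_iff_iff_not, injective_comp_iterate_iff hσν hπ le_rfl]
  constructor
  · rintro hne ⟨m, hm, hflip, -⟩
    exact hne m (by lia) (by lia) hflip
  · intro hnot d hd hlt hflip
    have hhalf := minimalPeriod_eq_two_mul_of_iterate_eq hν hσν hd hlt hflip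
    refine hnot ⟨d, hhalf, hflip, (injective_comp_iterate_iff hσν hπ hlt.le).2 ?_⟩
    intro e he hed hflip'
    have hhalf' := minimalPeriod_eq_two_mul_of_iterate_eq hν hσν he (hed.trans hlt) hflip'
    lia

end

theorem fst_eq_fst_iff_eq_or_eq_not {Y : Type*} (q r : Y × Bool) :
    q.1 = r.1 ↔ q = r ∨ q = (r.1, !r.2) := by
  rcases q with ⟨y, _ | _⟩ <;> rcases r with ⟨z, _ | _⟩ <;> simp

/-- Let `σ` be a bijection of `Y × Bool` commuting with the involution
`ν(y,ε) = (y,¬ε)`, with `σ^b = id` (`b ≥ 1`) and such that `σ^k` is fixed-point free for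
`1 ≤ k ≤ b−1`. Then every point `p` satisfies exactly one of:
(T1) the first components of `p, σp, …, σ^{b−1}p` are pairwise distinct; or
(T2) `b = 2m` is even, `σ^m p = ν p`, and the first components of `p, σp, …, σ^{m−1}p`
are pairwise distinct. -/
theorem stmt_10 {Y : Type*} (b : ℕ) (hb : 1 ≤ b) (σ : Equiv.Perm (Y × Bool))
    (hcomm : ∀ q : Y × Bool, σ (q.1, !q.2) = ((σ q).1, !(σ q).2))
    (hord : σ ^ b = 1)
    (hfree : ∀ k : ℕ, 1 ≤ k → k ≤ b - 1 → ∀ q : Y × Bool, (σ ^ k) q ≠ q) :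
    ∀ p : Y × Bool,
      Xor'
        (Function.Injective fun k : Fin b => ((σ ^ (k : ℕ)) p).1)
        (∃ m : ℕ, b = 2 * m ∧ (σ ^ m) p = (p.1, !p.2) ∧
          Function.Injective fun k : Fin m => ((σ ^ (k : ℕ)) p).1) := by
  intro p
  have hper : IsPeriodicPt σ b p := Equiv.congr_fun hord p
  obtain rfl := minimalPeriod_eq_of_forall_iterate_ne hb hper fun k hk hkb =>
    hfree k hk (Nat.le_sub_one_of_lt hkb) p
  exact stmt_10_general (ν := fun q => (q.1, !q.2)) (fun q => by simp) hcomm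
    fst_eq_fst_iff_eq_or_eq_not (mk_mem_periodicPts hb hper)
end

section
/- Let g ∈ ℝ[x, y] be a squarefree homogeneous polynomial of degree d ≥ 2. Then the partial derivatives ∂g/∂x and ∂g/∂y are relatively prime in ℝ[x, y], i.e. every common divisor of ∂g/∂x and ∂g/∂y is a unit. -/
open MvPolynomial

/-!
Let `h` divide every partial derivative of `g`. By Euler's identity `h` divides `d • g`, hence `g`.
Write `g = h * q`. The Leibniz rule gives `h ∣ q * ∂ᵢh`, and `h` is prime to `q` because `g` is
squarefree, so `h ∣ ∂ᵢh` for every `i`. Differentiation in a variable lowers the degree in it, so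
`∂ᵢh = 0` for every `i`; in characteristic zero this makes `h` a nonzero constant.
-/

theorem dvd_derivation_of_squarefree {R A : Type*} [CommSemiring R] [CommRing A]
    [DecompositionMonoid A] [Algebra R A] (D : Derivation R A A) {a b : A} (ha : Squarefree a)
    (hb : b ∣ a) (hbD : b ∣ D a) : b ∣ D b := by
  obtain ⟨c, rfl⟩ := hb
  rw [D.leibniz, smul_eq_mul, smul_eq_mul, dvd_add_right (dvd_mul_right b (D c))] at hbD
  exact (IsRelPrime.of_squarefree_mul ha).dvd_of_dvd_mul_left hbD

section PDeriv

variable {σ R : Type*} [CommSemiring R] {p : MvPolynomial σ R} {i : σ}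

theorem degreeOf_pderiv_lt (hi : i ∈ p.vars) : degreeOf i (pderiv i p) < degreeOf i p := by
  rw [degreeOf_lt_iff (Nat.pos_of_ne_zero (mem_vars_iff_degreeOf_ne_zero.1 hi))]
  intro m hm
  rw [mem_support_iff, coeff_pderiv] at hm
  have hle : (m + Finsupp.single i 1 : σ →₀ ℕ) i ≤ degreeOf i p :=
    monomial_le_degreeOf i (mem_support_iff.2 (left_ne_zero_of_mul hm))
  rw [Finsupp.add_apply, Finsupp.single_eq_same] at hle
  omega

theorem pderiv_eq_zero_of_dvd [NoZeroDivisors R] (h : p ∣ pderiv i p) : pderiv i p = 0 := by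
  by_contra hne
  have hlt : degreeOf i (pderiv i p) < degreeOf i p :=
    degreeOf_pderiv_lt (not_imp_comm.1 pderiv_eq_zero_of_notMem_vars hne)
  obtain ⟨q, hq⟩ := h
  rw [hq] at hne hlt
  rw [degreeOf_mul_eq (left_ne_zero_of_mul hne) (right_ne_zero_of_mul hne)] at hlt
  omega

theorem pderiv_eq_zero_iff_notMem_vars [NoZeroDivisors R] [CharZero R] :
    pderiv i p = 0 ↔ i ∉ p.vars := by
  refine ⟨fun h0 hi => ?_, pderiv_eq_zero_of_notMem_vars⟩
  obtain ⟨m, hm, him⟩ := (mem_vars_iff_mem_support i).1 hi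
  have hle : Finsupp.single i 1 ≤ m :=
    Finsupp.single_le_iff.2 (Nat.one_le_iff_ne_zero.2 (Finsupp.mem_support_iff.1 him))
  have hcoeff : coeff (m - Finsupp.single i 1) (pderiv i p) = 0 := by rw [h0, coeff_zero]
  rw [coeff_pderiv, tsub_add_cancel_of_le hle] at hcoeff
  exact mul_ne_zero (mem_support_iff.1 hm) (Nat.cast_add_one_ne_zero _) hcoeff

theorem forall_pderiv_eq_zero_iff_eq_C [NoZeroDivisors R] [CharZero R] :
    (∀ i, pderiv i p = 0) ↔ p = C (coeff 0 p) := by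
  simp only [pderiv_eq_zero_iff_notMem_vars, ← vars_eq_empty_iff_eq_C,
    Finset.eq_empty_iff_forall_notMem]

theorem dvd_nsmul_of_isHomogeneous_of_forall_dvd_pderiv {g h : MvPolynomial σ R} {n : ℕ}
    (hg : g.IsHomogeneous n) (h_dvd : ∀ i, h ∣ pderiv i g) : h ∣ n • g := by
  -- Euler's identity needs finitely many variables, and `g` involves only finitely many.
  obtain ⟨s, g, rfl⟩ := exists_finset_rename g
  rw [IsHomogeneous.rename_isHomogeneous_iff Subtype.val_injective] at hg
  rw [← map_nsmul, ← hg.sum_X_mul_pderiv, map_sum]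
  refine Finset.dvd_sum fun i _ => ?_
  rw [map_mul, ← pderiv_rename Subtype.val_injective]
  exact (h_dvd i).mul_left _

end PDeriv

section Field

variable {σ K : Type*} [Field K] [CharZero K] {g h : MvPolynomial σ K}

theorem isUnit_of_forall_dvd_pderiv_self (hne : h ≠ 0) (h_dvd : ∀ i, h ∣ pderiv i h) :
    IsUnit h := by
  have hC : h = C (coeff 0 h) :=
    forall_pderiv_eq_zero_iff_eq_C.1 fun i => pderiv_eq_zero_of_dvd (h_dvd i)
  rw [hC, C_ne_zero] at hne
  rw [hC]
  exact hne.isUnit.map C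

theorem isUnit_of_squarefree_of_dvd_of_forall_dvd_pderiv (hsf : Squarefree g) (hg : h ∣ g)
    (h_dvd : ∀ i, h ∣ pderiv i g) : IsUnit h :=
  isUnit_of_forall_dvd_pderiv_self (ne_zero_of_dvd_ne_zero hsf.ne_zero hg) fun i =>
    dvd_derivation_of_squarefree (pderiv i) hsf hg (h_dvd i)

theorem stmt_12_general {d : ℕ} (hd : d ≠ 0) (hsf : Squarefree g) (hhom : g.IsHomogeneous d)
    (h_dvd : ∀ i, h ∣ pderiv i g) : IsUnit h := by
  have hdg : h ∣ C (d : K) * g := by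
    simpa only [nsmul_eq_mul, map_natCast] using
      dvd_nsmul_of_isHomogeneous_of_forall_dvd_pderiv hhom h_dvd
  have hunit : IsUnit (C (d : K) : MvPolynomial σ K) := (Nat.cast_ne_zero.2 hd).isUnit.map C
  exact isUnit_of_squarefree_of_dvd_of_forall_dvd_pderiv hsf (hunit.dvd_mul_left.1 hdg) h_dvd

end Field

/-- If `g ∈ ℝ[x,y]` is a squarefree homogeneous polynomial of degree `d ≥ 2`,
then its formal partial derivatives are relatively prime: every common divisor is a unit. -/
theorem stmt_12 (g : MvPolynomial (Fin 2) ℝ) (d : ℕ) (hd : 2 ≤ d)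
    (hsf : Squarefree g) (hhom : g.IsHomogeneous d) :
    ∀ h : MvPolynomial (Fin 2) ℝ,
      h ∣ pderiv (0 : Fin 2) g → h ∣ pderiv (1 : Fin 2) g → IsUnit h :=
  fun _ hx hy => stmt_12_general (by omega) hsf hhom (Fin.forall_fin_two.2 ⟨hx, hy⟩)
end

section
/- Let A, B ∈ ℝ[x, y] be nonzero homogeneous polynomials of the same degree k that are relatively prime in ℝ[x, y]. Then there exists m ≥ 1 and polynomials P, Q ∈ ℝ[x, y] such that A·P + B·Q = x^m; equivalently, x^m lies in the ideal of ℝ[x, y] generated by A and B. Similarly, there exists m' ≥ 1 with y^{m'} in the ideal generated by A and B. -/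
open MvPolynomial

/-!
Setting `y = 1` turns `A` and `B` into coprime univariate polynomials `a` and `b`: a common factor
of `a` and `b` homogenizes to a common factor of `A` and `B`. Homogenizing a Bézout identity
`u * a + v * b = 1` in a large degree `n` gives `U * A + V * B = y ^ n`. The power of `x` follows by
exchanging the variables.
-/

section Homogenize

variable {R : Type*} [CommSemiring R]

lemma homogenize_dvd_homogenize_of_le {p : Polynomial R} {m n : ℕ} (hm : p.natDegree ≤ m)
    (hmn : m ≤ n) : p.homogenize m ∣ p.homogenize n := by
  obtain ⟨l, rfl⟩ := Nat.exists_eq_add_of_le hmn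
  rw [← mul_one p, Polynomial.homogenize_mul p 1 hm (by simp), mul_one]
  exact dvd_mul_right _ _

lemma exists_X_one_pow_mem_span_pair_homogenize {a b : Polynomial R} {k l : ℕ}
    (hab : IsCoprime a b) (ha : a.natDegree ≤ k) (hb : b.natDegree ≤ l) :
    ∃ m : ℕ, 1 ≤ m ∧ X 1 ^ m ∈
      Ideal.span ({a.homogenize k, b.homogenize l} : Set (MvPolynomial (Fin 2) R)) := by
  obtain ⟨u, v, huv⟩ := hab
  -- Adding `l` and `k` crosswise gives both products the same degree; `+ 1` makes it positive.
  let s := u.natDegree + v.natDegree + l + 1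
  let t := u.natDegree + v.natDegree + k + 1
  have hst : t + l = s + k := by lia
  refine ⟨s + k, by lia, Ideal.mem_span_pair.mpr ⟨u.homogenize s, v.homogenize t, ?_⟩⟩
  calc u.homogenize s * a.homogenize k + v.homogenize t * b.homogenize l
      = (u * a).homogenize (s + k) + (v * b).homogenize (t + l) := by
        rw [Polynomial.homogenize_mul u a (by lia) ha, Polynomial.homogenize_mul v b (by lia) hb]
    _ = (u * a + v * b).homogenize (s + k) := by rw [hst, Polynomial.homogenize_add]
    _ = X 1 ^ (s + k) := by rw [huv, Polynomial.homogenize_one]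

end Homogenize

section Dehomogenize

variable {R : Type*} [CommSemiring R] {A : MvPolynomial (Fin 2) R} {k : ℕ}

/-- The dehomogenization `A(X, 1)` of a bivariate polynomial `A`, inverse to
`Polynomial.homogenize · k` between forms of degree `k` and polynomials of degree at most `k`. It is
an `abbrev` so that the library lemmas about `aeval ![X, 1]` apply to it. -/
noncomputable abbrev dehomogenize : MvPolynomial (Fin 2) R →ₐ[R] Polynomial R :=
  aeval ![Polynomial.X, 1]

lemma natDegree_dehomogenize_le_totalDegree (A : MvPolynomial (Fin 2) R) :
    (dehomogenize A).natDegree ≤ A.totalDegree := by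
  have hvars (i : Fin 2) : (![Polynomial.X, 1] i : Polynomial R).natDegree ≤ 1 := by
    fin_cases i
    · exact Polynomial.natDegree_X_le
    · simp
  simpa only [mul_one] using aeval_natDegree_le A le_rfl _ hvars

lemma natDegree_dehomogenize_le (hA : A.IsHomogeneous k) : (dehomogenize A).natDegree ≤ k :=
  (natDegree_dehomogenize_le_totalDegree A).trans hA.totalDegree_le

lemma homogenize_dehomogenize (hA : A.IsHomogeneous k) : (dehomogenize A).homogenize k = A :=
  Polynomial.homogenize_eq_of_isHomogeneous hA rfl

lemma homogenize_dvd_of_dvd_dehomogenize [NoZeroDivisors R] (hA : A.IsHomogeneous k)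
    {g : Polynomial R} (hg : g ∣ dehomogenize A) : g.homogenize g.natDegree ∣ A :=
  calc g.homogenize g.natDegree
      ∣ (dehomogenize A).homogenize (dehomogenize A).natDegree := Polynomial.homogenize_dvd hg
    _ ∣ (dehomogenize A).homogenize k :=
        homogenize_dvd_homogenize_of_le le_rfl (natDegree_dehomogenize_le hA)
    _ = A := homogenize_dehomogenize hA

lemma isRelPrime_dehomogenize [NoZeroDivisors R] {B : MvPolynomial (Fin 2) R} {l : ℕ}
    (hA : A.IsHomogeneous k) (hB : B.IsHomogeneous l) (hAB : IsRelPrime A B) :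
    IsRelPrime (dehomogenize A) (dehomogenize B) := by
  intro g hgA hgB
  have hunit : IsUnit (g.homogenize g.natDegree) :=
    hAB (homogenize_dvd_of_dvd_dehomogenize hA hgA) (homogenize_dvd_of_dvd_dehomogenize hB hgB)
  simpa only [Polynomial.aeval_homogenize_X_one g le_rfl] using hunit.map dehomogenize

end Dehomogenize

section Field

variable {K : Type*} [Field K] {A B : MvPolynomial (Fin 2) K} {k l : ℕ}

lemma exists_X_one_pow_mem_span_pair (hA : A.IsHomogeneous k) (hB : B.IsHomogeneous l)
    (hAB : IsRelPrime A B) :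
    ∃ m : ℕ, 1 ≤ m ∧ X 1 ^ m ∈ Ideal.span ({A, B} : Set (MvPolynomial (Fin 2) K)) := by
  simpa only [homogenize_dehomogenize hA, homogenize_dehomogenize hB] using
    exists_X_one_pow_mem_span_pair_homogenize (isRelPrime_dehomogenize hA hB hAB).isCoprime
      (natDegree_dehomogenize_le hA) (natDegree_dehomogenize_le hB)

theorem stmt_14_general (hA : A.IsHomogeneous k) (hB : B.IsHomogeneous l) (hAB : IsRelPrime A B)
    (i : Fin 2) :
    ∃ m : ℕ, 1 ≤ m ∧ X i ^ m ∈ Ideal.span ({A, B} : Set (MvPolynomial (Fin 2) K)) := by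
  let e := renameEquiv K (Equiv.swap i 1)
  have heX : e (X i) = X 1 := by simp [e]
  have heAB : IsRelPrime (e A) (e B) := .of_map e.symm (by simpa using hAB)
  have heA : (e A).IsHomogeneous k := hA.rename_isHomogeneous
  have heB : (e B).IsHomogeneous l := hB.rename_isHomogeneous
  obtain ⟨m, hm, hmem⟩ := exists_X_one_pow_mem_span_pair heA heB heAB
  refine ⟨m, hm, (Ideal.apply_mem_of_equiv_iff (f := e.toRingEquiv)).mp ?_⟩
  simpa [Ideal.map_span, Set.image_pair, heX] using hmem

end Field

/-- If `A, B ∈ ℝ[x,y]` are nonzero relatively prime homogeneous polynomials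
of the same degree `k`, then some power `x^m` (with `m ≥ 1`) can be written as `A·P + B·Q`,
i.e. lies in the ideal generated by `A` and `B`; similarly some power `y^{m'}` lies in
that ideal. -/
theorem stmt_14 (A B : MvPolynomial (Fin 2) ℝ) (k : ℕ)
    (hA0 : A ≠ 0) (hB0 : B ≠ 0)
    (hA : A.IsHomogeneous k) (hB : B.IsHomogeneous k)
    (hcop : ∀ d : MvPolynomial (Fin 2) ℝ, d ∣ A → d ∣ B → IsUnit d) :
    (∃ m : ℕ, 1 ≤ m ∧ (∃ P Q : MvPolynomial (Fin 2) ℝ, A * P + B * Q = X 0 ^ m) ∧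
      X 0 ^ m ∈ Ideal.span ({A, B} : Set (MvPolynomial (Fin 2) ℝ))) ∧
    (∃ m' : ℕ, 1 ≤ m' ∧
      X 1 ^ m' ∈ Ideal.span ({A, B} : Set (MvPolynomial (Fin 2) ℝ))) := by
  have hAB : IsRelPrime A B := fun d ↦ hcop d
  obtain ⟨m, hm, hmem⟩ := stmt_14_general hA hB hAB 0
  exact ⟨⟨m, hm, by simpa only [mul_comm] using Ideal.mem_span_pair.mp hmem, hmem⟩,
    stmt_14_general hA hB hAB 1⟩
end

section
/- Let g ∈ ℝ[x, y] be a squarefree homogeneous polynomial of degree d ≥ 2. Then the quotient ring ℝ[x, y] / J(g) is a finite-dimensional vector space over ℝ, where J(g) is the Jacobian ideal of g. -/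
open MvPolynomial

/-!
By Euler's identity `g` lies in its Jacobian ideal `J`. If a prime polynomial `p` divided every
partial derivative of `g`, it would also divide `g = p * h`, and then, by the Leibniz rule, it would
divide every `∂ᵢp * h`; since `g` is squarefree, `p ∤ h`, so `p ∣ ∂ᵢp` and `∂ᵢp = 0` for degree
reasons. Over a perfect field this makes `p` a constant or a `char K`-th power, which is absurd.
Hence `J` lies in no principal prime ideal, so it has height at least two, and in a polynomial ring
in two variables every prime ideal containing it is maximal.
-/

section PartialDerivatives

variable {σ R K : Type*}

theorem totalDegree_pderiv_lt [CommSemiring R] {f : MvPolynomial σ R} {i : σ}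
    (h : pderiv i f ≠ 0) : (pderiv i f).totalDegree < f.totalDegree := by
  obtain ⟨m, hm, hdeg⟩ : ∃ m ∈ (pderiv i f).support, (pderiv i f).totalDegree = m.degree :=
    Finset.exists_mem_eq_sup _ (support_nonempty.mpr h) _
  rw [mem_support_iff, coeff_pderiv] at hm
  calc (pderiv i f).totalDegree = m.degree := hdeg
    _ < (m + Finsupp.single i 1).degree := by simp
    _ ≤ f.totalDegree := le_totalDegree (mem_support_iff.mpr (left_ne_zero_of_mul hm))

theorem not_dvd_pderiv_of_pderiv_ne_zero [CommRing R] [IsDomain R] {f : MvPolynomial σ R}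
    {i : σ} (h : pderiv i f ≠ 0) : ¬ f ∣ pderiv i f := fun hdvd ↦
  (totalDegree_pderiv_lt h).not_ge (totalDegree_le_of_dvd_of_isDomain hdvd h)

theorem natCast_eq_zero_of_pderiv_eq_zero [CommSemiring R] [NoZeroDivisors R]
    {f : MvPolynomial σ R} {i : σ} (h : pderiv i f = 0) {m : σ →₀ ℕ} (hm : m ∈ f.support) :
    (m i : R) = 0 := by
  obtain hmi | hmi := Nat.eq_zero_or_pos (m i)
  · rw [hmi, Nat.cast_zero]
  have hle : Finsupp.single i 1 ≤ m := Finsupp.single_le_iff.mpr hmi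
  have hcoeff : coeff m f * (m i : R) = 0 := by
    have := congrArg (coeff (m - Finsupp.single i 1)) h
    rwa [coeff_pderiv, coeff_zero, tsub_add_cancel_of_le hle, ← Nat.cast_add_one,
      Finsupp.tsub_apply, Finsupp.single_eq_same, Nat.sub_add_cancel hmi] at this
  exact (mul_eq_zero.mp hcoeff).resolve_left (mem_support_iff.mp hm)

theorem totalDegree_eq_zero_of_forall_pderiv_eq_zero [CommSemiring R] [NoZeroDivisors R]
    [CharZero R] {f : MvPolynomial σ R} (h : ∀ i, pderiv i f = 0) : f.totalDegree = 0 :=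
  (totalDegree_eq_zero_iff σ f).mpr fun _ hm i ↦
    Nat.cast_eq_zero.mp (natCast_eq_zero_of_pderiv_eq_zero (h i) hm)

theorem mem_range_frobenius_of_forall_pderiv_eq_zero [CommSemiring R] [NoZeroDivisors R] (p : ℕ)
    [Fact p.Prime] [CharP R p] [PerfectRing R p] {f : MvPolynomial σ R}
    (h : ∀ i, pderiv i f = 0) : f ∈ (frobenius (MvPolynomial σ R) p).rangeS := by
  rw [f.as_sum]
  refine sum_mem fun m hm ↦ ?_
  have hdvd (i : σ) : p ∣ m i :=
    (CharP.cast_eq_zero_iff R p _).mp (natCast_eq_zero_of_pderiv_eq_zero (h i) hm)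
  obtain ⟨a, ha⟩ := surjective_frobenius R p (coeff m f)
  refine ⟨monomial (m.mapRange (· / p) (Nat.zero_div p)) a, ?_⟩
  rw [frobenius_def, monomial_pow, ← frobenius_def, ha]
  have hpdiv : p • m.mapRange (· / p) (Nat.zero_div p) = m :=
    Finsupp.ext fun i ↦ Nat.mul_div_cancel' (hdvd i)
  rw [hpdiv]

theorem exists_pderiv_ne_zero_of_irreducible [Field K] [PerfectField K] {f : MvPolynomial σ K}
    (hf : Irreducible f) : ∃ i, pderiv i f ≠ 0 := by
  by_contra! h
  obtain _ | ⟨p, _, _⟩ := CharP.exists' K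
  · have hC := totalDegree_eq_zero_iff_eq_C.mp (totalDegree_eq_zero_of_forall_pderiv_eq_zero h)
    have h0 : coeff 0 f ≠ 0 := fun h0 ↦ hf.ne_zero (by rw [hC, h0, C_0])
    exact hf.not_isUnit (hC ▸ (IsUnit.mk0 _ h0).map C)
  · obtain ⟨f, rfl⟩ := mem_range_frobenius_of_forall_pderiv_eq_zero p h
    exact not_irreducible_pow (Fact.out : p.Prime).ne_one hf

theorem exists_not_dvd_pderiv_of_squarefree [Field K] [PerfectField K] {f g : MvPolynomial σ K}
    (hg : Squarefree g) (hf : Prime f) (hfg : f ∣ g) : ∃ i, ¬ f ∣ pderiv i g := by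
  obtain ⟨i, hi⟩ := exists_pderiv_ne_zero_of_irreducible hf.irreducible
  obtain ⟨h, rfl⟩ := hfg
  refine ⟨i, fun hdvd ↦ ?_⟩
  rw [pderiv_mul, dvd_add_left (dvd_mul_right _ _)] at hdvd
  obtain hdvd | hdvd := hf.dvd_or_dvd hdvd
  · exact not_dvd_pderiv_of_pderiv_ne_zero hi hdvd
  · exact hf.not_isUnit (hg f (mul_dvd_mul_left f hdvd))

end PartialDerivatives

section Height

theorem two_le_height_of_forall_prime_not_le_span {R : Type*} [CommRing R] [IsDomain R]
    [UniqueFactorizationMonoid R] {I : Ideal R} (hI : I ≠ ⊥)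
    (h : ∀ p, Prime p → ¬ I ≤ Ideal.span {p}) : 2 ≤ I.height := by
  rw [I.height_eq_inf_minimalPrimes]
  refine le_iInf₂ fun P hP ↦ ?_
  have hPprime : P.IsPrime := hP.isPrime
  obtain ⟨p, hpP, hp⟩ := hPprime.exists_mem_prime_of_ne_bot (ne_bot_of_le_ne_bot hI hP.le)
  have hspan : (Ideal.span {p}).IsPrime := (Ideal.span_singleton_prime hp.ne_zero).mpr hp
  have hbot : ⊥ < Ideal.span {p} :=
    bot_lt_iff_ne_bot.mpr (Ideal.span_singleton_eq_bot.not.mpr hp.ne_zero)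
  have hlt : Ideal.span {p} < P :=
    ((Ideal.span_singleton_le_iff_mem P).mpr hpP).lt_of_ne fun heq ↦ h p hp (heq ▸ hP.le)
  calc (2 : ℕ∞) = (⊥ : Ideal R).height + 1 + 1 := by rw [Ideal.height_bot]; rfl
    _ ≤ (Ideal.span {p}).height + 1 := by
      gcongr
      exact Ideal.height_add_one_le_of_lt_of_isPrime hbot
    _ ≤ P.height := Ideal.height_add_one_le_of_lt_of_isPrime hlt

theorem finite_quotient_of_card_le_height {σ K : Type*} [Finite σ] [Field K]
    {I : Ideal (MvPolynomial σ K)} (h : Nat.card σ ≤ I.height) :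
    Module.Finite K (MvPolynomial σ K ⧸ I) := by
  rw [Module.finite_iff_krullDimLE_zero,
    Ideal.krullDimLE_zero_quotient_iff_forall_minimalPrimes_isMaximal]
  intro P hP
  have hPprime : P.IsPrime := hP.isPrime
  have hdim : ringKrullDim (MvPolynomial σ K) = Nat.card σ := by
    rw [MvPolynomial.ringKrullDim_of_isNoetherianRing, ringKrullDim_eq_zero_of_field, zero_add]
  have : FiniteRingKrullDim (MvPolynomial σ K) := by
    rw [finiteRingKrullDim_iff_ne_bot_and_top, hdim]
    exact ⟨WithBot.natCast_ne_bot _, WithBot.coe_injective.ne (ENat.natCast_ne_top _)⟩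
  refine Ideal.isMaximal_of_height_eq_ringKrullDim
    (le_antisymm Ideal.height_le_ringKrullDim_of_isPrime ?_)
  rw [hdim]
  exact_mod_cast h.trans (Ideal.height_mono hP.le)

end Height

section JacobianIdeal

variable {σ R K : Type*}

/-- The Jacobian ideal of a polynomial, generated by all of its partial derivatives. The polynomial
itself is not among the generators, so this is the ideal of the Milnor algebra, not of the Tjurina
algebra. -/
noncomputable def jacobianIdeal [CommSemiring R] (g : MvPolynomial σ R) :
    Ideal (MvPolynomial σ R) :=
  Ideal.span (Set.range fun i ↦ pderiv i g)

theorem jacobianIdeal_fin_two [CommSemiring R] (g : MvPolynomial (Fin 2) R) :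
    jacobianIdeal g = Ideal.span {pderiv 0 g, pderiv 1 g} := by
  have hrange : Set.range (fun i ↦ pderiv i g) = {pderiv 0 g, pderiv 1 g} :=
    Set.ext fun f ↦ by simp [eq_comm]
  rw [jacobianIdeal, hrange]

theorem mem_jacobianIdeal_of_isWeightedHomogeneous [Finite σ] [CommSemiring R]
    {g : MvPolynomial σ R} {w : σ → ℕ} {n : ℕ} (hn : IsUnit (n : R))
    (hg : g.IsWeightedHomogeneous w n) : g ∈ jacobianIdeal g := by
  have := Fintype.ofFinite σ
  have hunit : IsUnit (n : MvPolynomial σ R) := by simpa using hn.map (C (σ := σ))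
  rw [← Ideal.unit_mul_mem_iff_mem _ hunit, ← nsmul_eq_mul, ← hg.sum_weight_X_mul_pderiv]
  exact sum_mem fun i _ ↦ Submodule.smul_of_tower_mem _ _
    (Ideal.mul_mem_left _ _ (Ideal.subset_span ⟨i, rfl⟩))

theorem two_le_height_jacobianIdeal [Field K] [PerfectField K] {g : MvPolynomial σ K}
    (hsf : Squarefree g) (hg : g ∈ (jacobianIdeal g).radical) : 2 ≤ (jacobianIdeal g).height := by
  refine two_le_height_of_forall_prime_not_le_span (fun hbot ↦ ?_) fun f hf hle ↦ ?_
  · rw [hbot, Ideal.radical_bot_of_isReduced, Ideal.mem_bot] at hg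
    exact hsf.ne_zero hg
  · have hspan : (Ideal.span {f}).IsPrime := (Ideal.span_singleton_prime hf.ne_zero).mpr hf
    have hfg : f ∣ g := Ideal.mem_span_singleton.mp (hspan.radical_le_iff.mpr hle hg)
    obtain ⟨i, hi⟩ := exists_not_dvd_pderiv_of_squarefree hsf hf hfg
    exact hi (Ideal.mem_span_singleton.mp (hle (Ideal.subset_span ⟨i, rfl⟩)))

/-- By the Nullstellensatz, `hg` says that `g` vanishes at each of its critical points over an
algebraic closure. -/
theorem stmt_16_general [Finite σ] (hσ : Nat.card σ ≤ 2) [Field K] [PerfectField K]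
    {g : MvPolynomial σ K} (hsf : Squarefree g) (hg : g ∈ (jacobianIdeal g).radical) :
    Module.Finite K (MvPolynomial σ K ⧸ jacobianIdeal g) :=
  finite_quotient_of_card_le_height <|
    (Nat.cast_le.mpr hσ).trans (two_le_height_jacobianIdeal hsf hg)

end JacobianIdeal

/-- If `g ∈ ℝ[x,y]` is a squarefree homogeneous polynomial of degree `d ≥ 2`,
then the quotient of `ℝ[x,y]` by the Jacobian ideal of `g` is a finite-dimensional
real vector space. -/
theorem stmt_16 (g : MvPolynomial (Fin 2) ℝ) (d : ℕ) (hd : 2 ≤ d)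
    (hsf : Squarefree g) (hhom : g.IsHomogeneous d) :
    FiniteDimensional ℝ
      (MvPolynomial (Fin 2) ℝ ⧸ Ideal.span ({pderiv (0 : Fin 2) g, pderiv (1 : Fin 2) g} :
        Set (MvPolynomial (Fin 2) ℝ))) := by
  have hd0 : IsUnit (d : ℝ) := .mk0 _ (Nat.cast_ne_zero.mpr (by lia))
  rw [← jacobianIdeal_fin_two]
  exact stmt_16_general (by simp) hsf
    (Ideal.le_radical (mem_jacobianIdeal_of_isWeightedHomogeneous hd0 hhom))
end
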